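/- arXiv:1802.04464 — 5 statements merged into one kernel-verified Lean document; each statement's English description precedes it below -/
import Mathlib

section
/- Let d be a positive integer, let p, r ∈ (0,∞] satisfy r ≤ min(1,p), and let a, b : ℤ^d → ℂ with ‖a‖_{ℓ^p(ℤ^d)} < ∞ and ‖b‖_{ℓ^r(ℤ^d)} < ∞. Then for every x ∈ ℤ^d the series (a*b)(x) = Σ_{j∈ℤ^d} a(x−j)·b(j) converges absolutely, and ‖a*b‖_{ℓ^p(ℤ^d)} ≤ ‖a‖_{ℓ^p(ℤ^d)}·‖b‖_{ℓ^r(ℤ^d)}. -/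
open MeasureTheory ENNReal

lemma aux_pow {ι : Type*} (f : ι → ℝ≥0∞) {q : ℝ} (hq : 1 ≤ q) :
    ∑' i, f i ^ q ≤ (∑' i, f i) ^ q := by
  have key : ∀ z : ℝ≥0∞, z ^ q = z * z ^ (q - 1) := by
    intro z
    have := ENNReal.rpow_add_of_nonneg (x := z) 1 (q - 1) (by norm_num) (by linarith)
    rw [ENNReal.rpow_one] at this
    rw [← this]; congr 1; ring
  rw [key (∑' i, f i), ← ENNReal.tsum_mul_right]
  refine ENNReal.tsum_le_tsum fun i => ?_
  rw [key]
  gcongr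
  · exact ENNReal.le_tsum i

lemma aux_nest {ι : Type*} (f : ι → ℝ≥0∞) {s t : ℝ} (hs : 0 < s) (hst : s ≤ t) :
    ∑' i, f i ^ t ≤ ((∑' i, f i ^ s) ^ (1 / s)) ^ t := by
  have h := aux_pow (fun i => f i ^ s) (q := t / s) (by rwa [le_div_iff₀ hs, one_mul])
  rw [← ENNReal.rpow_mul]
  have e : 1 / s * t = t / s := by ring
  rw [e]
  refine le_trans (le_of_eq ?_) h
  refine tsum_congr fun i => ?_
  rw [← ENNReal.rpow_mul]
  congr 1
  field_simp

lemma aux_conv {G : Type*} [AddCommGroup G] (A B : G → ℝ≥0∞) :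
    ∑' x, ∑' j, A (x - j) * B j = (∑' x, A x) * ∑' j, B j := by
  rw [ENNReal.tsum_comm, ← ENNReal.tsum_mul_left]
  refine tsum_congr fun j => ?_
  rw [ENNReal.tsum_mul_right]
  congr 1
  exact (Equiv.subRight j).tsum_eq A

lemma aux_holder {ι : Type*} (A B : ι → ℝ≥0∞) {P : ℝ} (hP : 1 ≤ P) :
    (∑' j, A j * B j) ^ P ≤ (∑' j, A j ^ P * B j) * (∑' j, B j) ^ (P - 1) := by
  have hP0 : 0 < P := by linarith
  letI : MeasurableSpace ι := ⊤
  have h := ENNReal.lintegral_mul_norm_pow_le (μ := (Measure.count : Measure ι))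
    (f := fun j => A j ^ P * B j) (g := B)
    (Measurable.aemeasurable fun _ _ => trivial) (Measurable.aemeasurable fun _ _ => trivial)
    (p := 1 / P) (q := 1 - 1 / P)
    (by positivity) (by rw [sub_nonneg, div_le_one hP0]; exact hP) (by ring)
  simp only [lintegral_count] at h
  have e : ∀ j, (A j ^ P * B j) ^ (1 / P) * B j ^ (1 - 1 / P) = A j * B j := by
    intro j
    rw [ENNReal.mul_rpow_of_nonneg _ _ (by positivity), ← ENNReal.rpow_mul, mul_assoc,
      ← ENNReal.rpow_add_of_nonneg _ _ (by positivity)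
        (by rw [sub_nonneg, div_le_one hP0]; exact hP)]
    have e1 : P * (1 / P) = 1 := by field_simp
    have e2 : 1 / P + (1 - 1 / P) = 1 := by ring
    rw [e1, e2, ENNReal.rpow_one, ENNReal.rpow_one]
  simp only [e] at h
  refine (ENNReal.rpow_le_rpow h hP0.le).trans (le_of_eq ?_)
  rw [ENNReal.mul_rpow_of_nonneg _ _ hP0.le, ← ENNReal.rpow_mul, ← ENNReal.rpow_mul]
  have e1 : 1 / P * P = 1 := by field_simp
  have e2 : (1 - 1 / P) * P = P - 1 := by field_simp
  rw [e1, e2, ENNReal.rpow_one]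

lemma aux_main {G : Type*} [AddCommGroup G] (A B : G → ℝ≥0∞) {P R : ℝ}
    (hR : 0 < R) (hR1 : R ≤ 1) (hRP : R ≤ P) :
    ∑' x, (∑' j, A (x - j) * B j) ^ P ≤
      (∑' x, A x ^ P) * ((∑' j, B j ^ R) ^ (1 / R)) ^ P := by
  have hP0 : 0 < P := by linarith
  rcases le_total P 1 with hP | hP
  · calc ∑' x, (∑' j, A (x - j) * B j) ^ P
        ≤ ∑' x, ∑' j, A (x - j) ^ P * B j ^ P := by
          refine ENNReal.tsum_le_tsum fun x => ?_
          have h := aux_nest (fun j => A (x - j) * B j) hP0 hP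
          simp only [ENNReal.rpow_one] at h
          refine (ENNReal.rpow_le_rpow h hP0.le).trans (le_of_eq ?_)
          rw [← ENNReal.rpow_mul, one_div_mul_cancel hP0.ne', ENNReal.rpow_one]
          exact tsum_congr fun j => ENNReal.mul_rpow_of_nonneg _ _ hP0.le
      _ = (∑' x, A x ^ P) * ∑' j, B j ^ P :=
          aux_conv (fun x => A x ^ P) (fun j => B j ^ P)
      _ ≤ _ := by gcongr; exact aux_nest B hR hRP
  · have hB := aux_nest B hR hR1
    simp only [ENNReal.rpow_one] at hB
    calc ∑' x, (∑' j, A (x - j) * B j) ^ P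
        ≤ ∑' x, (∑' j, A (x - j) ^ P * B j) * (∑' j, B j) ^ (P - 1) :=
          ENNReal.tsum_le_tsum fun x => aux_holder (fun j => A (x - j)) B hP
      _ = (∑' x, A x ^ P) * (∑' j, B j) ^ P := by
          rw [ENNReal.tsum_mul_right, aux_conv (fun x => A x ^ P) B, mul_assoc]
          congr 1
          have := ENNReal.rpow_add_of_nonneg (x := ∑' j, B j) 1 (P - 1) (by norm_num)
            (by linarith)
          rw [ENNReal.rpow_one] at this
          rw [← this]; congr 1; ring
      _ ≤ _ := by gcongr

lemma aux_enn {G : Type*} [AddCommGroup G] [MeasurableSpace G] [MeasurableSingletonClass G]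
    (A B : G → ℝ≥0∞) {p r : ℝ≥0∞} (hr : 0 < r) (hr1 : r ≤ 1) (hrp : r ≤ p) :
    eLpNorm (fun x => ∑' j, A (x - j) * B j) p (Measure.count : Measure G)
      ≤ eLpNorm A p (Measure.count : Measure G) * eLpNorm B r (Measure.count : Measure G) := by
  have hrt : r ≠ ⊤ := (hr1.trans_lt ENNReal.one_lt_top).ne
  have hR : 0 < r.toReal := ENNReal.toReal_pos hr.ne' hrt
  have hR1 : r.toReal ≤ 1 := by
    simpa using ENNReal.toReal_mono ENNReal.one_ne_top hr1
  have hp0 : p ≠ 0 := (hr.trans_le hrp).ne'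
  rw [eLpNorm_eq_lintegral_rpow_enorm_toReal hr.ne' hrt, lintegral_count]
  simp only [enorm_eq_self]
  by_cases hp : p = ⊤
  · subst hp
    have hB := aux_nest B hR hR1
    simp only [ENNReal.rpow_one] at hB
    simp only [eLpNorm_exponent_top, eLpNormEssSup, essSup_count, enorm_eq_self]
    refine iSup_le fun x => ?_
    calc ∑' j, A (x - j) * B j ≤ ∑' j, (⨆ i, A i) * B j :=
          ENNReal.tsum_le_tsum fun j => by gcongr; exact le_iSup A (x - j)
      _ = (⨆ i, A i) * ∑' j, B j := ENNReal.tsum_mul_left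
      _ ≤ _ := by gcongr
  · have hP0 : 0 < p.toReal := ENNReal.toReal_pos hp0 hp
    rw [eLpNorm_eq_lintegral_rpow_enorm_toReal hp0 hp, lintegral_count,
      eLpNorm_eq_lintegral_rpow_enorm_toReal hp0 hp, lintegral_count]
    simp only [enorm_eq_self]
    have h := aux_main A B hR hR1 (ENNReal.toReal_mono hp hrp)
    refine (ENNReal.rpow_le_rpow h (by positivity : 0 ≤ 1 / p.toReal)).trans (le_of_eq ?_)
    rw [ENNReal.mul_rpow_of_nonneg _ _ (by positivity)]
    congr 1
    rw [← ENNReal.rpow_mul _ p.toReal, mul_one_div_cancel hP0.ne', ENNReal.rpow_one]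

lemma aux_point {G : Type*} [MeasurableSpace G] [MeasurableSingletonClass G]
    (C : G → ℝ≥0∞) {p : ℝ≥0∞} (hp0 : p ≠ 0) (x : G) :
    C x ≤ eLpNorm C p (Measure.count : Measure G) := by
  by_cases hp : p = ⊤
  · subst hp
    simp only [eLpNorm_exponent_top, eLpNormEssSup, essSup_count, enorm_eq_self]
    exact le_iSup C x
  · have hP0 : 0 < p.toReal := ENNReal.toReal_pos hp0 hp
    rw [eLpNorm_eq_lintegral_rpow_enorm_toReal hp0 hp, lintegral_count]
    simp only [enorm_eq_self]
    have h : C x ^ p.toReal ≤ ∑' y, C y ^ p.toReal := ENNReal.le_tsum x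
    have h2 := ENNReal.rpow_le_rpow h (by positivity : 0 ≤ 1 / p.toReal)
    rwa [← ENNReal.rpow_mul, mul_one_div_cancel hP0.ne', ENNReal.rpow_one] at h2

/-- Discrete Young-type inequality on `ℤ^d`: if `r ≤ min(1,p)`,
`‖a‖_{ℓ^p} < ∞` and `‖b‖_{ℓ^r} < ∞`, then the convolution
`(a*b)(x) = Σ_j a(x−j)b(j)` converges absolutely at every point and
`‖a*b‖_{ℓ^p} ≤ ‖a‖_{ℓ^p}·‖b‖_{ℓ^r}`.  The `ℓ^p` quasi-norm over `ℤ^d` is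
realized as `eLpNorm` with respect to the counting measure. -/
theorem stmt_1 (d : ℕ) (hd : 0 < d) (p r : ℝ≥0∞) (hp : 0 < p) (hr : 0 < r)
    (hrp : r ≤ min 1 p) (a b : (Fin d → ℤ) → ℂ)
    (ha : eLpNorm a p (Measure.count : Measure (Fin d → ℤ)) < ⊤)
    (hb : eLpNorm b r (Measure.count : Measure (Fin d → ℤ)) < ⊤) :
    (∀ x : Fin d → ℤ, Summable fun j => ‖a (x - j) * b j‖) ∧
      eLpNorm (fun x => ∑' j, a (x - j) * b j) p
          (Measure.count : Measure (Fin d → ℤ))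
        ≤ eLpNorm a p (Measure.count : Measure (Fin d → ℤ))
            * eLpNorm b r (Measure.count : Measure (Fin d → ℤ)) := by
  have key := aux_enn (fun x => ‖a x‖ₑ) (fun x => ‖b x‖ₑ) hr (hrp.trans (min_le_left _ _))
    (hrp.trans (min_le_right _ _))
  have ea : eLpNorm (fun x => ‖a x‖ₑ) p (Measure.count : Measure (Fin d → ℤ))
      = eLpNorm a p (Measure.count : Measure (Fin d → ℤ)) := 
    le_antisymm (eLpNorm_mono_enorm fun x => by simp) (eLpNorm_mono_enorm fun x => by simp)
  have eb : eLpNorm (fun x => ‖b x‖ₑ) r (Measure.count : Measure (Fin d → ℤ))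
      = eLpNorm b r (Measure.count : Measure (Fin d → ℤ)) := 
    le_antisymm (eLpNorm_mono_enorm fun x => by simp) (eLpNorm_mono_enorm fun x => by simp)
  rw [ea, eb] at key
  refine ⟨fun x => ?_, le_trans (eLpNorm_mono_enorm fun x => ?_) key⟩
  · rw [← tsum_enorm_ne_top_iff_summable_norm]
    have h := (aux_point (fun x => ∑' j, ‖a (x - j)‖ₑ * ‖b j‖ₑ) hp.ne' x).trans key
    simp only [enorm_mul]
    exact (h.trans_lt (ENNReal.mul_lt_top ha hb)).ne
  · refine enorm_tsum_le_tsum_enorm.trans (le_of_eq ?_)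
    simp only [enorm_mul, enorm_eq_self]
end

section
/- Let d be a positive integer, let T : ℝ^d → ℝ^d be an invertible linear map (so that Λ = T(ℤ^d) is a full-rank lattice), let p, r ∈ (0,∞] satisfy r ≤ min(1,p), let a : ℤ^d → ℂ, and let f : ℝ^d → ℂ be measurable. Define g(x) = Σ_{k∈ℤ^d} |a(k)|·|f(x − T(k))| (a pointwise sum with values in [0,∞]). Then ‖g‖_{L^p(ℝ^d)} ≤ ‖a‖_{ℓ^r(ℤ^d)}·‖f‖_{L^p(ℝ^d)}. -/
open MeasureTheory ENNReal

/-- The `L^p` quasi-norm of an `ℝ≥0∞`-valued function: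
`(∫ g^p)^(1/p)` for `p < ∞`, and the essential supremum for `p = ∞`. -/
noncomputable def eLpNormENN {α : Type*} [MeasurableSpace α] (g : α → ℝ≥0∞)
    (p : ℝ≥0∞) (μ : Measure α) : ℝ≥0∞ :=
  if p = ⊤ then essSup g μ else (∫⁻ x, g x ^ p.toReal ∂μ) ^ (1 / p.toReal)

lemma aux_finset {ι : Type*} (s : Finset ι) (b : ι → ℝ≥0∞) {q : ℝ} (h0 : 0 < q) (h1 : q ≤ 1) :
    (∑ i ∈ s, b i) ^ q ≤ ∑ i ∈ s, b i ^ q := by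
  classical
  induction s using Finset.induction_on with
  | empty => simp [h0]
  | insert i s hi ih =>
    rw [Finset.sum_insert hi, Finset.sum_insert hi]
    exact (ENNReal.rpow_add_le_add_rpow _ _ h0.le h1).trans (by gcongr)

lemma aux_tsum {ι : Type*} (b : ι → ℝ≥0∞) {q : ℝ} (h0 : 0 < q) (h1 : q ≤ 1) :
    (∑' i, b i) ^ q ≤ ∑' i, b i ^ q := by
  rw [← ENNReal.le_rpow_inv_iff h0, ENNReal.tsum_eq_iSup_sum]
  refine iSup_le fun s => ?_
  rw [ENNReal.le_rpow_inv_iff h0]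
  exact (aux_finset s b h0 h1).trans (ENNReal.sum_le_tsum s)

lemma aux_mono {ι : Type*} (b : ι → ℝ≥0∞) {s t : ℝ} (h0 : 0 < s) (h1 : s ≤ t) :
    (∑' i, b i ^ t) ^ (1 / t) ≤ (∑' i, b i ^ s) ^ (1 / s) := by
  have ht : 0 < t := h0.trans_le h1
  have h := aux_tsum (fun i => b i ^ t) (q := s / t) (div_pos h0 ht) ((div_le_one ht).2 h1)
  have e : ∀ i, (b i ^ t) ^ (s / t) = b i ^ s := fun i => by
    rw [← ENNReal.rpow_mul, mul_div_cancel₀ _ ht.ne']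
  simp only [e] at h
  calc (∑' i, b i ^ t) ^ (1 / t) = ((∑' i, b i ^ t) ^ (s / t)) ^ (1 / s) := by
        rw [← ENNReal.rpow_mul]; congr 1; field_simp
    _ ≤ _ := ENNReal.rpow_le_rpow h (by positivity)

lemma aux_jensen {ι : Type*} (b c : ι → ℝ≥0∞) {p : ℝ} (hp : 1 ≤ p) :
    (∑' i, b i * c i) ^ p ≤ (∑' i, b i) ^ (p - 1) * ∑' i, b i * c i ^ p := by
  have h0 : 0 < p := by linarith
  rw [← ENNReal.le_rpow_inv_iff h0, ENNReal.tsum_eq_iSup_sum]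
  refine iSup_le fun s => ?_
  refine (ENNReal.inner_le_weight_mul_Lp_of_nonneg s hp b c).trans ?_
  rw [ENNReal.mul_rpow_of_nonneg _ _ (by positivity), ← ENNReal.rpow_mul]
  have e : (p - 1) * p⁻¹ = 1 - p⁻¹ := by field_simp
  have e2 : 0 ≤ 1 - p⁻¹ := by
    have := inv_le_one_of_one_le₀ hp
    linarith
  rw [e]
  gcongr <;> exact ENNReal.sum_le_tsum s

/-- Semi-discrete Young-type inequality over a full-rank lattice `Λ = T(ℤ^d)`:
if `r ≤ min(1,p)` and `g(x) = Σ_k |a(k)|·|f(x − T(k))|`, then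
`‖g‖_{L^p(ℝ^d)} ≤ ‖a‖_{ℓ^r(ℤ^d)}·‖f‖_{L^p(ℝ^d)}`. -/
theorem stmt_2 (d : ℕ) (hd : 0 < d) (T : (Fin d → ℝ) ≃ₗ[ℝ] (Fin d → ℝ))
    (p r : ℝ≥0∞) (hp : 0 < p) (hr : 0 < r) (hrp : r ≤ min 1 p)
    (a : (Fin d → ℤ) → ℂ) (f : (Fin d → ℝ) → ℂ) (hf : Measurable f)
    (g : (Fin d → ℝ) → ℝ≥0∞)
    (hg : ∀ x, g x = ∑' k : Fin d → ℤ,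
      (‖a k‖₊ : ℝ≥0∞) * (‖f (x - T (fun i => (k i : ℝ)))‖₊ : ℝ≥0∞)) :
    eLpNormENN g p volume
      ≤ eLpNorm a r (Measure.count : Measure (Fin d → ℤ)) * eLpNorm f p volume := by
  set A : ℝ≥0∞ := eLpNorm a r (Measure.count : Measure (Fin d → ℤ)) with hA
  have hr1 : r ≤ 1 := hrp.trans (min_le_left _ _)
  have hrp' : r ≤ p := hrp.trans (min_le_right _ _)
  have hrt : r ≠ ⊤ := ne_top_of_le_ne_top ENNReal.one_ne_top hr1
  have hs0 : 0 < r.toReal := ENNReal.toReal_pos hr.ne' hrt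
  have hs1 : r.toReal ≤ 1 := by
    simpa using (ENNReal.toReal_le_toReal hrt ENNReal.one_ne_top).2 hr1
  have hAe : A = (∑' k, (‖a k‖₊ : ℝ≥0∞) ^ r.toReal) ^ (1 / r.toReal) := by
    rw [hA, eLpNorm_eq_lintegral_rpow_enorm_toReal hr.ne' hrt, lintegral_count]
    rfl
  have hA1 : ∑' k, (‖a k‖₊ : ℝ≥0∞) ≤ A := by
    have := aux_mono (fun k => (‖a k‖₊ : ℝ≥0∞)) hs0 hs1
    simpa [hAe] using this
  have hmp : ∀ v : Fin d → ℝ, MeasurePreserving (fun x : Fin d → ℝ => x - v) volume volume :=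
    fun v => measurePreserving_sub_right volume v
  unfold eLpNormENN
  split_ifs with hpt
  · subst hpt
    refine essSup_le_of_ae_le _ ?_
    have h1 : ∀ᵐ x : Fin d → ℝ, ∀ k : Fin d → ℤ,
        (‖f (x - T (fun i => (k i : ℝ)))‖₊ : ℝ≥0∞) ≤ eLpNorm f ⊤ volume := by
      rw [ae_all_iff]
      intro k
      have h2 : ∀ᵐ y : Fin d → ℝ, (‖f y‖₊ : ℝ≥0∞) ≤ eLpNorm f ⊤ volume := by
        rw [eLpNorm_exponent_top]
        exact ae_le_eLpNormEssSup
      exact (hmp _).quasiMeasurePreserving.ae h2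
    filter_upwards [h1] with x hx
    rw [hg x]
    calc _ ≤ ∑' k, (‖a k‖₊ : ℝ≥0∞) * eLpNorm f ⊤ volume :=
          ENNReal.tsum_le_tsum fun k => mul_le_mul_right (hx k) _
      _ = (∑' k, (‖a k‖₊ : ℝ≥0∞)) * eLpNorm f ⊤ volume := ENNReal.tsum_mul_right
      _ ≤ _ := mul_le_mul_left hA1 _
  · have ht0 : 0 < p.toReal := ENNReal.toReal_pos hp.ne' hpt
    have hst : r.toReal ≤ p.toReal := (ENNReal.toReal_le_toReal hrt hpt).2 hrp'
    set t := p.toReal with ht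
    set F : ℝ≥0∞ := ∫⁻ x, (‖f x‖₊ : ℝ≥0∞) ^ t with hF
    have hFe : eLpNorm f p volume = F ^ (1 / t) := by
      rw [eLpNorm_eq_lintegral_rpow_enorm_toReal hp.ne' hpt]
      rfl
    have hmeas : Measurable fun x => (‖f x‖₊ : ℝ≥0∞) ^ t := by fun_prop
    have htr : ∀ v : Fin d → ℝ, ∫⁻ x, (‖f (x - v)‖₊ : ℝ≥0∞) ^ t = F := fun v =>
      (hmp v).lintegral_comp hmeas
    have hmeas2 : ∀ v : Fin d → ℝ, Measurable fun x => (‖f (x - v)‖₊ : ℝ≥0∞) ^ t := fun v =>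
      hmeas.comp (hmp v).measurable
    have hsum : ∀ b : (Fin d → ℤ) → ℝ≥0∞,
        ∫⁻ x, ∑' k, b k * (‖f (x - T (fun i => (k i : ℝ)))‖₊ : ℝ≥0∞) ^ t = (∑' k, b k) * F := by
      intro b
      rw [lintegral_tsum fun k => ((hmeas2 _).const_mul _).aemeasurable, ← ENNReal.tsum_mul_right]
      congr 1
      ext k
      rw [lintegral_const_mul _ (hmeas2 _), htr]
    have key : ∫⁻ x, g x ^ t ≤ A ^ t * F := by
      rcases le_total t 1 with h1 | h1
      · have hAt : ∑' k, (‖a k‖₊ : ℝ≥0∞) ^ t ≤ A ^ t := by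
          rw [← ENNReal.rpow_inv_le_iff ht0, hAe, ← one_div]
          exact aux_mono _ hs0 hst
        calc ∫⁻ x, g x ^ t ≤ ∫⁻ x, ∑' k, (‖a k‖₊ : ℝ≥0∞) ^ t *
              (‖f (x - T (fun i => (k i : ℝ)))‖₊ : ℝ≥0∞) ^ t := by
              refine lintegral_mono fun x => ?_
              rw [hg x]
              refine (aux_tsum _ ht0 h1).trans (le_of_eq ?_)
              congr 1
              ext k
              rw [ENNReal.mul_rpow_of_nonneg _ _ ht0.le]
          _ = (∑' k, (‖a k‖₊ : ℝ≥0∞) ^ t) * F := hsum _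
          _ ≤ _ := mul_le_mul_left hAt _
      · set B : ℝ≥0∞ := ∑' k, (‖a k‖₊ : ℝ≥0∞) with hB
        calc ∫⁻ x, g x ^ t ≤ ∫⁻ x, B ^ (t - 1) * ∑' k, (‖a k‖₊ : ℝ≥0∞) *
              (‖f (x - T (fun i => (k i : ℝ)))‖₊ : ℝ≥0∞) ^ t := by
              refine lintegral_mono fun x => ?_
              rw [hg x]
              exact aux_jensen _ _ h1
          _ = B ^ (t - 1) * (B * F) := by
              rw [lintegral_const_mul, hsum]
              exact Measurable.ennreal_tsum fun k => (hmeas2 _).const_mul _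
          _ = B ^ t * F := by
              rw [← mul_assoc]
              congr 1
              nth_rewrite 2 [← ENNReal.rpow_one B]
              rw [← ENNReal.rpow_add_of_nonneg _ _ (by linarith) zero_le_one]
              congr 1
              ring
          _ ≤ A ^ t * F := by gcongr
    calc (∫⁻ x, g x ^ t) ^ (1 / t) ≤ (A ^ t * F) ^ (1 / t) := by gcongr
      _ = A * eLpNorm f p volume := by
        rw [ENNReal.mul_rpow_of_nonneg _ _ (by positivity), ← ENNReal.rpow_mul, hFe,
          mul_one_div_cancel ht0.ne', ENNReal.rpow_one]
end

section
/- Let p₁, p₂, r₁, r₂ ∈ (0,∞] satisfy r₁ ≤ min(1,p₁) and r₂ ≤ min(1,p₁,p₂). Let a : ℤ² → ℂ and let f : ℝ² → ℂ be measurable. Define g(x) = Σ_{j∈ℤ²} |a(j)|·|f(x − j)| for x ∈ ℝ². Then ‖g‖_{L^{p₁,p₂}(ℝ²)} ≤ ‖a‖_{ℓ^{r₁,r₂}(ℤ²)}·‖f‖_{L^{p₁,p₂}(ℝ²)}. -/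
open MeasureTheory ENNReal

/-- Mixed `L^{p₁,p₂}` quasi-norm on `ℝ²`: the `L^{p₁}` norm in the first
variable is taken first (over `ℝ`, w.r.t. Lebesgue measure), followed by the
`L^{p₂}` norm in the second variable w.r.t. the measure `μ₂`. -/
noncomputable def mixedLNorm (h : ℝ × ℝ → ℝ≥0∞) (p₁ p₂ : ℝ≥0∞)
    (μ₂ : Measure ℝ) : ℝ≥0∞ :=
  eLpNormENN (fun x₂ => eLpNormENN (fun x₁ => h (x₁, x₂)) p₁ volume) p₂ μ₂

/-- Mixed `ℓ^{r₁,r₂}` quasi-norm on `ℤ²`: the `ℓ^{r₁}` norm in the first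
index is taken first, followed by the `ℓ^{r₂}` norm in the second index
(counting measure realizes the discrete sums/suprema). -/
noncomputable def mixedlNorm (c : ℤ × ℤ → ℝ≥0∞) (r₁ r₂ : ℝ≥0∞) : ℝ≥0∞ :=
  eLpNormENN
    (fun j₂ => eLpNormENN (fun j₁ => c (j₁, j₂)) r₁ (Measure.count : Measure ℤ))
    r₂ (Measure.count : Measure ℤ)

theorem eLpNormENN_eq {α : Type*} [MeasurableSpace α] (g : α → ℝ≥0∞)
    (p : ℝ≥0∞) (hp : p ≠ 0) (μ : Measure α) : eLpNormENN g p μ = eLpNorm g p μ := by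
  unfold eLpNormENN eLpNorm eLpNormEssSup eLpNorm'
  simp [hp]

theorem minkowski_tsum {α ι : Type*} [Countable ι] [MeasurableSpace α] (μ : Measure α)
    (u : ι → α → ℝ≥0∞) (hu : ∀ i, Measurable (u i)) (p : ℝ≥0∞) (hp : 1 ≤ p) :
    eLpNorm (fun x => ∑' i, u i x) p μ ≤ ∑' i, eLpNorm (u i) p μ := by
  have hp0 : p ≠ 0 := (zero_lt_one.trans_le hp).ne'
  by_cases hpt : p = ⊤
  · subst hpt
    rw [eLpNorm_exponent_top]
    refine essSup_le_of_ae_le _ ?_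
    have : ∀ᵐ x ∂μ, ∀ i, ‖u i x‖ₑ ≤ eLpNormEssSup (u i) μ :=
      ae_all_iff.2 fun i => ae_le_eLpNormEssSup
    filter_upwards [this] with x hx
    exact ENNReal.tsum_le_tsum fun i => by simpa using hx i
  · have hq : 0 < p.toReal := ENNReal.toReal_pos hp0 hpt
    rw [eLpNorm_eq_eLpNorm' hp0 hpt, eLpNorm', one_div, ENNReal.rpow_inv_le_iff hq]
    have h1 : ∀ x, ‖∑' i, u i x‖ₑ ^ p.toReal
        = ⨆ s : Finset ι, (∑ i ∈ s, u i x) ^ p.toReal := by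
      intro x
      rw [enorm_eq_self, ENNReal.tsum_eq_iSup_sum]
      exact (ENNReal.orderIsoRpow _ hq).map_iSup _
    simp_rw [h1]
    rw [lintegral_iSup_directed]
    · refine iSup_le fun s => ?_
      rw [← ENNReal.rpow_inv_le_iff hq]
      have h2 := eLpNorm_sum_le (μ := μ) (s := s) (f := u)
        (fun i _ => (hu i).aestronglyMeasurable) hp
      rw [eLpNorm_eq_eLpNorm' hp0 hpt, eLpNorm', one_div] at h2
      simp only [enorm_eq_self, Finset.sum_apply] at h2
      exact h2.trans (ENNReal.sum_le_tsum s)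
    · intro s
      have : Measurable fun x => ∑ i ∈ s, u i x := Finset.measurable_sum _ fun i _ => hu i
      exact (this.pow_const _).aemeasurable
    · classical
      intro s t
      refine ⟨s ∪ t, fun x => ?_, fun x => ?_⟩
      · exact ENNReal.rpow_le_rpow (Finset.sum_le_sum_of_subset Finset.subset_union_left) hq.le
      · exact ENNReal.rpow_le_rpow (Finset.sum_le_sum_of_subset Finset.subset_union_right) hq.le

theorem key_rpow {α ι : Type*} [Countable ι] [MeasurableSpace α] (μ : Measure α)
    (G : α → ℝ≥0∞)
    (h : ι → α → ℝ≥0∞) (hh : ∀ i, Measurable (h i)) (p : ℝ≥0∞) (r : ℝ) (hr : 0 < r)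
    (hrp : ENNReal.ofReal r ≤ p) (hG : ∀ x, G x ^ r ≤ ∑' i, h i x ^ r) :
    eLpNorm G p μ ^ r ≤ ∑' i, eLpNorm (h i) p μ ^ r := by
  have hr0 : ENNReal.ofReal r ≠ 0 := by simpa using hr
  have hpq : p / ENNReal.ofReal r * ENNReal.ofReal r = p :=
    ENNReal.div_mul_cancel hr0 ENNReal.ofReal_ne_top
  have hq : 1 ≤ p / ENNReal.ofReal r := by
    rw [ENNReal.le_div_iff_mul_le (Or.inl hr0) (Or.inl ENNReal.ofReal_ne_top)]
    simpa using hrp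
  have e : ∀ v : α → ℝ≥0∞, eLpNorm v p μ ^ r
      = eLpNorm (fun x => v x ^ r) (p / ENNReal.ofReal r) μ := by
    intro v
    have := eLpNorm_enorm_rpow (μ := μ) (p := p / ENNReal.ofReal r) v hr
    rw [hpq] at this
    exact this.symm
  simp_rw [e]
  refine le_trans ?_ (minkowski_tsum μ _ (fun i => (hh i).pow_const r) _ hq)
  exact eLpNorm_mono_enorm fun x => by simpa using hG x

theorem tsum_rpow_le' {ι : Type*} (h : ι → ℝ≥0∞) (r : ℝ) (hr : 0 < r) (hr1 : r ≤ 1) :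
    (∑' i, h i) ^ r ≤ ∑' i, h i ^ r := by
  have : (∑' i, h i) ^ r = ⨆ s : Finset ι, (∑ i ∈ s, h i) ^ r := by
    rw [ENNReal.tsum_eq_iSup_sum]
    exact (ENNReal.orderIsoRpow _ hr).map_iSup _
  rw [this]
  refine iSup_le fun s => le_trans ?_ (ENNReal.sum_le_tsum s)
  exact Finset.le_sum_of_subadditive (fun x : ℝ≥0∞ => x ^ r) (by simp [hr])
    (fun x y => ENNReal.rpow_add_le_add_rpow _ _ hr.le hr1) _ _

theorem eLpNorm_const_mul' {α : Type*} [MeasurableSpace α] (μ : Measure α)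
    (c : ℝ≥0∞) (F : α → ℝ≥0∞) (hF : Measurable F) (p : ℝ≥0∞) (hp : p ≠ 0) :
    eLpNorm (fun x => c * F x) p μ = c * eLpNorm F p μ := by
  by_cases hpt : p = ⊤
  · subst hpt
    simp only [eLpNorm_exponent_top, eLpNormEssSup, enorm_eq_self]
    exact ENNReal.essSup_const_mul
  · have hq : 0 < p.toReal := ENNReal.toReal_pos hp hpt
    simp only [eLpNorm_eq_eLpNorm' hp hpt, eLpNorm', enorm_eq_self, one_div]
    simp_rw [ENNReal.mul_rpow_of_nonneg _ _ hq.le]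
    rw [lintegral_const_mul _ (hF.pow_const _), ENNReal.mul_rpow_of_nonneg _ _ (by positivity),
      ENNReal.rpow_rpow_inv hq.ne']

theorem eLpNorm_shift (c : ℝ) (F : ℝ → ℝ≥0∞) (hF : Measurable F) (p : ℝ≥0∞) :
    eLpNorm (fun x => F (x - c)) p volume = eLpNorm F p volume :=
  eLpNorm_comp_measurePreserving hF.aestronglyMeasurable (measurePreserving_sub_right volume c)

theorem measurable_inner (F : ℝ × ℝ → ℝ≥0∞) (hF : Measurable F) (p : ℝ≥0∞) (hp : p ≠ 0) :
    Measurable fun x₂ => eLpNorm (fun x₁ => F (x₁, x₂)) p volume := by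
  by_cases hpt : p = ⊤
  · subst hpt
    simp only [eLpNorm_exponent_top, eLpNormEssSup, enorm_eq_self]
    refine measurable_of_Iic fun c => ?_
    have : (fun x₂ => essSup (fun x₁ => F (x₁, x₂)) volume) ⁻¹' Set.Iic c
        = {x₂ | volume ((fun x₁ => (x₁, x₂)) ⁻¹' (F ⁻¹' Set.Ioi c)) = 0} := by
      ext x₂
      simp only [Set.mem_preimage, Set.mem_Iic, Set.mem_setOf_eq]
      constructor
      · intro h
        have := ENNReal.ae_le_essSup (μ := volume) (fun x₁ => F (x₁, x₂))
        refine measure_mono_null ?_ (ae_iff.1 this)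
        intro x hx
        exact not_le.2 (lt_of_le_of_lt h hx)
      · intro h
        refine essSup_le_of_ae_le _ (ae_iff.2 ?_)
        refine measure_mono_null ?_ h
        intro x hx
        exact not_le.1 hx
    rw [this]
    exact measurable_measure_prodMk_right (hF measurableSet_Ioi) (measurableSet_singleton 0)
  · simp only [eLpNorm_eq_eLpNorm' hp hpt, eLpNorm', enorm_eq_self]
    exact (Measurable.lintegral_prod_left' (hF.pow_const _)).pow_const _

theorem conv_rpow (p r : ℝ≥0∞) (hr : 0 < r) (hr1 : r ≤ 1) (hrp : r ≤ p)
    (A : ℤ → ℝ≥0∞) (F : ℤ → ℝ → ℝ≥0∞) (hF : ∀ j, Measurable (F j)) (N : ℤ → ℝ≥0∞)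
    (G : ℝ → ℝ≥0∞) (hG : ∀ x, G x ^ r.toReal ≤ ∑' j, (F j x) ^ r.toReal)
    (hN : ∀ j, eLpNorm (F j) p volume ≤ A j * N j) :
    eLpNorm G p volume ^ r.toReal ≤ ∑' j, (A j * N j) ^ r.toReal := by
  have hrt : r ≠ ⊤ := (hr1.trans_lt ENNReal.one_lt_top).ne
  refine (key_rpow volume G F hF p r.toReal (ENNReal.toReal_pos hr.ne' hrt) ?_ hG).trans ?_
  · rwa [ENNReal.ofReal_toReal hrt]
  · exact ENNReal.tsum_le_tsum fun j => ENNReal.rpow_le_rpow (hN j) ENNReal.toReal_nonneg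

theorem count_norm (A : ℤ → ℝ≥0∞) (r : ℝ≥0∞) (hrt : r ≠ ⊤) :
    eLpNormENN A r (Measure.count : Measure ℤ) = (∑' j, A j ^ r.toReal) ^ (1 / r.toReal) := by
  rw [eLpNormENN, if_neg hrt, lintegral_count]

/-- Mixed-norm semi-discrete Young-type inequality on `ℝ²`: if
`r₁ ≤ min(1,p₁)`, `r₂ ≤ min(1,p₁,p₂)` and `g(x) = Σ_{j∈ℤ²} |a(j)|·|f(x−j)|`,
then `‖g‖_{L^{p₁,p₂}} ≤ ‖a‖_{ℓ^{r₁,r₂}}·‖f‖_{L^{p₁,p₂}}`. -/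
theorem stmt_4 (p₁ p₂ r₁ r₂ : ℝ≥0∞)
    (hp₁ : 0 < p₁) (hp₂ : 0 < p₂) (hr₁ : 0 < r₁) (hr₂ : 0 < r₂)
    (hr₁p : r₁ ≤ min 1 p₁) (hr₂p : r₂ ≤ min 1 (min p₁ p₂))
    (a : ℤ × ℤ → ℂ) (f : ℝ × ℝ → ℂ) (hf : Measurable f)
    (g : ℝ × ℝ → ℝ≥0∞)
    (hg : ∀ x, g x = ∑' j : ℤ × ℤ,
      (‖a j‖₊ : ℝ≥0∞) * (‖f (x - ((j.1 : ℝ), (j.2 : ℝ)))‖₊ : ℝ≥0∞)) :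
    mixedLNorm g p₁ p₂ volume
      ≤ mixedlNorm (fun j => (‖a j‖₊ : ℝ≥0∞)) r₁ r₂
          * mixedLNorm (fun x => (‖f x‖₊ : ℝ≥0∞)) p₁ p₂ volume := by
  have hr₁1 : r₁ ≤ 1 := hr₁p.trans (min_le_left _ _)
  have hr₁p1 : r₁ ≤ p₁ := hr₁p.trans (min_le_right _ _)
  have hr₂1 : r₂ ≤ 1 := hr₂p.trans (min_le_left _ _)
  have hr₂p1 : r₂ ≤ p₁ := hr₂p.trans ((min_le_right _ _).trans (min_le_left _ _))
  have hr₂p2 : r₂ ≤ p₂ := hr₂p.trans ((min_le_right _ _).trans (min_le_right _ _))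
  have hr₁t : r₁ ≠ ⊤ := (hr₁1.trans_lt ENNReal.one_lt_top).ne
  have hr₂t : r₂ ≠ ⊤ := (hr₂1.trans_lt ENNReal.one_lt_top).ne
  have hs₁ : 0 < r₁.toReal := ENNReal.toReal_pos hr₁.ne' hr₁t
  have hs₂ : 0 < r₂.toReal := ENNReal.toReal_pos hr₂.ne' hr₂t
  have hs₁1 : r₁.toReal ≤ 1 := by simpa using ENNReal.toReal_mono ENNReal.one_ne_top hr₁1
  have hs₂1 : r₂.toReal ≤ 1 := by simpa using ENNReal.toReal_mono ENNReal.one_ne_top hr₂1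
  unfold mixedLNorm mixedlNorm
  simp_rw [eLpNormENN_eq _ p₁ hp₁.ne', eLpNormENN_eq _ p₂ hp₂.ne', count_norm _ _ hr₁t,
    count_norm _ _ hr₂t]
  set φ : ℝ × ℝ → ℝ≥0∞ := fun x => (‖f x‖₊ : ℝ≥0∞) with hφ
  have hφm : Measurable φ := hf.nnnorm.coe_nnreal_ennreal
  set F : ℝ → ℝ≥0∞ := fun x₂ => eLpNorm (fun x₁ => φ (x₁, x₂)) p₁ volume with hFdef
  have hFm : Measurable F := measurable_inner φ hφm p₁ hp₁.ne'
  set A : ℤ → ℝ≥0∞ := fun j₂ =>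
    (∑' j₁ : ℤ, (‖a (j₁, j₂)‖₊ : ℝ≥0∞) ^ r₁.toReal) ^ (1 / r₁.toReal) with hA
  -- slices
  have hsl : ∀ y : ℝ, Measurable fun x₁ : ℝ => φ (x₁, y) := fun y =>
    hφm.comp (measurable_id.prodMk measurable_const)
  set H : ℝ → ℤ → ℝ → ℝ≥0∞ := fun x₂ j₂ x₁ =>
    ∑' j₁ : ℤ, (‖a (j₁, j₂)‖₊ : ℝ≥0∞) * φ (x₁ - j₁, x₂ - j₂) with hH
  have hsh : ∀ (j₁ : ℤ) (y : ℝ), Measurable fun x₁ : ℝ => φ (x₁ - j₁, y) := fun j₁ y =>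
    (hsl y).comp (measurable_id.sub_const _)
  have hHm : ∀ x₂ j₂, Measurable (H x₂ j₂) := fun x₂ j₂ =>
    Measurable.ennreal_tsum fun j₁ => (hsh j₁ _).const_mul _
  have hgH : ∀ x₁ x₂, g (x₁, x₂) = ∑' j₂, H x₂ j₂ x₁ := by
    intro x₁ x₂
    rw [hg, ENNReal.tsum_prod', ENNReal.tsum_comm]
    rfl
  have step1 : ∀ x₂ j₂, eLpNorm (H x₂ j₂) p₁ volume ≤ A j₂ * F (x₂ - j₂) := by
    intro x₂ j₂
    have h1 := conv_rpow p₁ r₁ hr₁ hr₁1 hr₁p1 (fun j₁ => (‖a (j₁, j₂)‖₊ : ℝ≥0∞))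
      (fun j₁ x₁ => (‖a (j₁, j₂)‖₊ : ℝ≥0∞) * φ (x₁ - j₁, x₂ - j₂))
      (fun j₁ => (hsh j₁ _).const_mul _) (fun _ => F (x₂ - j₂)) (H x₂ j₂)
      (fun x => tsum_rpow_le' _ _ hs₁ hs₁1)
      (fun j₁ => by
        rw [eLpNorm_const_mul' volume _ _ (hsh j₁ _) _ hp₁.ne']
        rw [eLpNorm_shift (j₁ : ℝ) (fun x₁ => φ (x₁, x₂ - j₂)) (hsl _)])
    simp_rw [ENNReal.mul_rpow_of_nonneg _ _ hs₁.le] at h1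
    rw [ENNReal.tsum_mul_right] at h1
    rw [← ENNReal.rpow_le_rpow_iff hs₁, ENNReal.mul_rpow_of_nonneg _ _ hs₁.le]
    simp only [hA, one_div]
    rwa [ENNReal.rpow_inv_rpow hs₁.ne']
  have step2 : ∀ x₂, eLpNorm (fun x₁ => g (x₁, x₂)) p₁ volume ^ r₂.toReal
      ≤ ∑' j₂ : ℤ, (A j₂ * F (x₂ - j₂)) ^ r₂.toReal := by
    intro x₂
    refine conv_rpow p₁ r₂ hr₂ hr₂1 hr₂p1 A (H x₂) (hHm x₂) (fun j₂ => F (x₂ - j₂)) _ ?_ (step1 x₂)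
    intro x₁
    rw [hgH]
    exact tsum_rpow_le' _ _ hs₂ hs₂1
  have hFs : ∀ j : ℤ, Measurable fun x : ℝ => F (x - j) := fun j =>
    hFm.comp (measurable_id.sub_const _)
  have step3 := conv_rpow p₂ r₂ hr₂ hr₂1 hr₂p2 A (fun j₂ x₂ => A j₂ * F (x₂ - j₂))
    (fun j => (hFs j).const_mul _) (fun _ => eLpNorm F p₂ volume) _ step2
    (fun j => by
      rw [eLpNorm_const_mul' volume _ _ (hFs j) _ hp₂.ne', eLpNorm_shift _ _ hFm])
  simp_rw [ENNReal.mul_rpow_of_nonneg _ _ hs₂.le] at step3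
  rw [ENNReal.tsum_mul_right] at step3
  rw [← ENNReal.rpow_le_rpow_iff hs₂, ENNReal.mul_rpow_of_nonneg _ _ hs₂.le, one_div r₂.toReal,
    ENNReal.rpow_inv_rpow hs₂.ne']
  exact step3
end

section
/- Let p₁, p₂, r₁, r₂ ∈ (0,∞] satisfy r₁ ≤ min(1,p₁) and r₂ ≤ min(1,p₁,p₂), let c ∈ ℝ, and let f : ℝ² → ℂ be measurable with |f(x + (0,1))| = |f(x + (c,0))| for every x ∈ ℝ². Let a : ℤ² → ℂ and define g(x) = Σ_{j∈ℤ²} |a(j)|·|f(x − j)|. Then ‖g‖_{L^{p₁,p₂}(ℝ×[0,1])} ≤ ‖a‖_{ℓ^{r₁,r₂}(ℤ²)}·‖f‖_{L^{p₁,p₂}(ℝ×[0,1])}. -/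
open MeasureTheory ENNReal

lemma aux_le_rpow {x y : ℝ≥0∞} {z : ℝ} (hz : 0 < z) : x ≤ y ^ (1 / z) ↔ x ^ z ≤ y := by
  rw [one_div, ENNReal.le_rpow_inv_iff hz]

lemma aux_rpow_tsum_le {ι : Type*} (u : ι → ℝ≥0∞) {r : ℝ} (h0 : 0 < r) (h1 : r ≤ 1) :
    (∑' i, u i) ^ r ≤ ∑' i, u i ^ r := by
  have hs : ∀ s : Finset ι, (∑ i ∈ s, u i) ^ r ≤ ∑ i ∈ s, u i ^ r := by
    classical
    intro s
    induction s using Finset.induction_on with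
    | empty => simp [h0]
    | insert a s ha ih =>
      rw [Finset.sum_insert ha, Finset.sum_insert ha]
      exact (ENNReal.rpow_add_le_add_rpow _ _ h0.le h1).trans (by gcongr)
  have : (∑' i, u i) ≤ (∑' i, u i ^ r) ^ (1 / r) := by
    rw [ENNReal.tsum_eq_iSup_sum]
    refine iSup_le fun s => ?_
    rw [aux_le_rpow h0]
    exact (hs s).trans (ENNReal.sum_le_tsum s)
  rwa [aux_le_rpow h0] at this

lemma aux_minkowski {α : Type*} [MeasurableSpace α] (μ : Measure α) {ι : Type*} [Countable ι]
    (u : ι → α → ℝ≥0∞) (hu : ∀ i, Measurable (u i)) {q : ℝ} (hq : 1 ≤ q) :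
    (∫⁻ x, (∑' i, u i x) ^ q ∂μ) ^ (1 / q) ≤ ∑' i, (∫⁻ x, u i x ^ q ∂μ) ^ (1 / q) := by
  have hq0 : 0 < q := by linarith
  have hs : ∀ s : Finset ι, (∫⁻ x, (∑ i ∈ s, u i x) ^ q ∂μ) ^ (1 / q)
      ≤ ∑ i ∈ s, (∫⁻ x, u i x ^ q ∂μ) ^ (1 / q) := by
    classical
    intro s
    induction s using Finset.induction_on with
    | empty => simp [hq0]
    | insert a s ha ih =>
      simp only [Finset.sum_insert ha]
      refine le_trans ?_ (add_le_add le_rfl ih)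
      exact ENNReal.lintegral_Lp_add_le (f := u a) (g := fun x => ∑ i ∈ s, u i x)
        (hu a).aemeasurable (Finset.measurable_fun_sum s fun i _ => hu i).aemeasurable hq
  have e : ∀ x, (∑' i, u i x) ^ q = ⨆ s : Finset ι, (∑ i ∈ s, u i x) ^ q := by
    intro x
    rw [ENNReal.tsum_eq_iSup_sum]
    exact (ENNReal.orderIsoRpow q hq0).map_iSup _
  simp_rw [e]
  rw [lintegral_iSup_directed]
  · rw [one_div, ENNReal.rpow_inv_le_iff hq0]
    refine iSup_le fun s => ?_
    rw [← ENNReal.rpow_inv_le_iff hq0, ← one_div]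
    exact (hs s).trans (ENNReal.sum_le_tsum s)
  · intro s
    exact ((Finset.measurable_fun_sum s fun i _ => hu i).pow_const q).aemeasurable
  · refine Monotone.directed_le fun s t hst x => ?_
    exact ENNReal.rpow_le_rpow (Finset.sum_le_sum_of_subset hst) hq0.le

lemma aux_quasi {α : Type*} [MeasurableSpace α] (μ : Measure α) {ι : Type*} [Countable ι]
    (u : ι → α → ℝ≥0∞) (hu : ∀ i, Measurable (u i)) {p : ℝ≥0∞} {r : ℝ} (h0 : 0 < r)
    (h1 : r ≤ 1) (hrp : ENNReal.ofReal r ≤ p) :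
    eLpNormENN (fun x => ∑' i, u i x) p μ ^ r ≤ ∑' i, eLpNormENN (u i) p μ ^ r := by
  by_cases hp : p = ⊤
  · simp only [eLpNormENN, hp, if_true]
    rw [← aux_le_rpow h0]
    refine essSup_le_of_ae_le _ ?_
    have : ∀ᵐ x ∂μ, ∀ i, u i x ≤ essSup (u i) μ := ae_all_iff.2 fun i => ENNReal.ae_le_essSup _
    filter_upwards [this] with x hx
    rw [aux_le_rpow h0]
    refine (aux_rpow_tsum_le _ h0 h1).trans (ENNReal.tsum_le_tsum fun i => ?_)
    exact ENNReal.rpow_le_rpow (hx i) h0.le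
  · simp only [eLpNormENN, hp, if_false]
    have hrp' : r ≤ p.toReal := (ENNReal.ofReal_le_iff_le_toReal hp).1 hrp
    set P := p.toReal
    have hP : 0 < P := by linarith
    have hq : 1 ≤ P / r := (one_le_div h0).2 hrp'
    have e1 : ∀ y : ℝ≥0∞, y ^ P = (y ^ r) ^ (P / r) := by
      intro y; rw [← ENNReal.rpow_mul]; congr 1; field_simp
    have e2 : ∀ y : ℝ≥0∞, (y ^ (1 / P)) ^ r = y ^ (1 / (P / r)) := by
      intro y; rw [← ENNReal.rpow_mul]; congr 1; field_simp
    simp_rw [e2, e1]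
    refine le_trans ?_ (aux_minkowski μ (fun i x => u i x ^ r) (fun i => (hu i).pow_const r) hq)
    gcongr
    exact aux_rpow_tsum_le _ h0 h1

lemma aux_const_mul {α : Type*} [MeasurableSpace α] (μ : Measure α) (u : α → ℝ≥0∞)
    (hu : Measurable u) {p : ℝ≥0∞} (hp0 : 0 < p) (K : ℝ≥0∞) :
    eLpNormENN (fun x => K * u x) p μ = K * eLpNormENN u p μ := by
  by_cases hp : p = ⊤
  · simp only [eLpNormENN, hp, if_true]
    exact ENNReal.essSup_const_mul
  · simp only [eLpNormENN, hp, if_false]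
    have hP : 0 < p.toReal := ENNReal.toReal_pos hp0.ne' hp
    simp_rw [ENNReal.mul_rpow_of_nonneg _ _ hP.le]
    rw [lintegral_const_mul _ (hu.pow_const _), ENNReal.mul_rpow_of_nonneg _ _ (by positivity),
      ← ENNReal.rpow_mul, mul_one_div_cancel hP.ne', ENNReal.rpow_one]

lemma aux_mono_s9 {α : Type*} [MeasurableSpace α] (μ : Measure α) {u v : α → ℝ≥0∞}
    (h : ∀ x, u x ≤ v x) (p : ℝ≥0∞) : eLpNormENN u p μ ≤ eLpNormENN v p μ := by
  by_cases hp : p = ⊤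
  · simp only [eLpNormENN, hp, if_true]
    exact essSup_mono_ae (Filter.Eventually.of_forall h)
  · simp only [eLpNormENN, hp, if_false]
    gcongr
    exact h _

lemma aux_translate (u : ℝ → ℝ≥0∞) (p : ℝ≥0∞) (t : ℝ) :
    eLpNormENN (fun x => u (x - t)) p volume ≤ eLpNormENN u p volume := by
  by_cases hp : p = ⊤
  · simp only [eLpNormENN, hp, if_true]
    refine essSup_le_of_ae_le _ ?_
    exact (measurePreserving_sub_right volume t).quasiMeasurePreserving.ae
      (ENNReal.ae_le_essSup u)
  · simp only [eLpNormENN, hp, if_false]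
    rw [lintegral_sub_right_eq_self (fun x => u x ^ p.toReal) t]

lemma aux_meas (h : ℝ × ℝ → ℝ≥0∞) (hh : Measurable h) (p : ℝ≥0∞) :
    Measurable (fun x₂ => eLpNormENN (fun x₁ => h (x₁, x₂)) p volume) := by
  by_cases hp : p = ⊤
  · simp only [eLpNormENN, hp, if_true]
    refine measurable_of_Iic fun t => ?_
    have hs : MeasurableSet {x : ℝ × ℝ | t < h x} := measurableSet_lt measurable_const hh
    have hm := measurable_measure_prodMk_right (μ := (volume : Measure ℝ)) hs
    convert hm (measurableSet_singleton 0) using 1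
    ext x₂
    simp only [Set.mem_preimage, Set.mem_Iic, Set.mem_singleton_iff, Set.mem_setOf_eq]
    have key : essSup (fun x₁ => h (x₁, x₂)) volume ≤ t ↔ ∀ᵐ x₁ : ℝ, h (x₁, x₂) ≤ t :=
      ⟨fun H => (ENNReal.ae_le_essSup _).mono fun x hx => hx.trans H,
        fun H => essSup_le_of_ae_le _ H⟩
    rw [key, ae_iff]
    simp only [not_le]
    rfl
  · simp only [eLpNormENN, hp, if_false]
    exact (Measurable.lintegral_prod_left' (hh.pow_const p.toReal)).pow_const _

/-- weighted sums of functions of bounded norm -/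
lemma aux_weighted (u : ℤ → ℝ → ℝ≥0∞) (hu : ∀ i, Measurable (u i)) {p r : ℝ≥0∞}
    (h0 : 0 < r) (h1 : r ≤ 1) (hrp : r ≤ p) (A : ℤ → ℝ≥0∞) (N : ℝ≥0∞)
    (hN : ∀ i, eLpNormENN (u i) p volume ≤ A i * N) :
    eLpNormENN (fun x => ∑' i, u i x) p volume ≤ eLpNormENN A r Measure.count * N := by
  have hr : r ≠ ⊤ := ne_top_of_le_ne_top one_ne_top h1
  have hR : 0 < r.toReal := ENNReal.toReal_pos h0.ne' hr
  have hR1 : r.toReal ≤ 1 := by simpa using ENNReal.toReal_mono one_ne_top h1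
  have H := aux_quasi volume u hu (p := p) hR hR1 (by rwa [ENNReal.ofReal_toReal hr])
  rw [← ENNReal.rpow_le_rpow_iff hR]
  refine H.trans ?_
  rw [ENNReal.mul_rpow_of_nonneg _ _ hR.le]
  simp only [eLpNormENN, hr, if_false]
  rw [← ENNReal.rpow_mul, one_div_mul_cancel hR.ne', ENNReal.rpow_one, lintegral_count,
    ← ENNReal.tsum_mul_right]
  refine ENNReal.tsum_le_tsum fun i => ?_
  rw [← ENNReal.mul_rpow_of_nonneg _ _ hR.le]
  exact ENNReal.rpow_le_rpow (by simpa only [eLpNormENN] using hN i) hR.le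

/-- Mixed-norm semi-discrete Young-type inequality on the strip `ℝ×[0,1]` for
an echo-periodic `f` (i.e. `|f(x+(0,1))| = |f(x+(c,0))|` for all `x`): if
`r₁ ≤ min(1,p₁)`, `r₂ ≤ min(1,p₁,p₂)` and `g(x) = Σ_{j∈ℤ²} |a(j)|·|f(x−j)|`,
then `‖g‖_{L^{p₁,p₂}(ℝ×[0,1])} ≤ ‖a‖_{ℓ^{r₁,r₂}}·‖f‖_{L^{p₁,p₂}(ℝ×[0,1])}`. -/
theorem stmt_9 (p₁ p₂ r₁ r₂ : ℝ≥0∞)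
    (hp₁ : 0 < p₁) (hp₂ : 0 < p₂) (hr₁ : 0 < r₁) (hr₂ : 0 < r₂)
    (hr₁p : r₁ ≤ min 1 p₁) (hr₂p : r₂ ≤ min 1 (min p₁ p₂)) (c : ℝ)
    (f : ℝ × ℝ → ℂ) (hf : Measurable f)
    (hecho : ∀ x : ℝ × ℝ, ‖f (x + ((0 : ℝ), (1 : ℝ)))‖ = ‖f (x + (c, (0 : ℝ)))‖)
    (a : ℤ × ℤ → ℂ)
    (g : ℝ × ℝ → ℝ≥0∞)
    (hg : ∀ x, g x = ∑' j : ℤ × ℤ,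
      (‖a j‖₊ : ℝ≥0∞) * (‖f (x - ((j.1 : ℝ), (j.2 : ℝ)))‖₊ : ℝ≥0∞)) :
    mixedLNorm g p₁ p₂ (volume.restrict (Set.Icc 0 1))
      ≤ mixedlNorm (fun j => (‖a j‖₊ : ℝ≥0∞)) r₁ r₂
          * mixedLNorm (fun x => (‖f x‖₊ : ℝ≥0∞)) p₁ p₂
              (volume.restrict (Set.Icc 0 1)) := by
  set F : ℝ × ℝ → ℝ≥0∞ := fun x => (‖f x‖₊ : ℝ≥0∞) with hF
  set A : ℤ × ℤ → ℝ≥0∞ := fun j => (‖a j‖₊ : ℝ≥0∞) with hA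
  have hFm : Measurable F := hf.nnnorm.coe_nnreal_ennreal
  have hE : ∀ x y : ℝ, F (x, y + 1) = F (x + c, y) := by
    intro x y
    have h := hecho (x, y)
    simp only [Prod.mk_add_mk, add_zero] at h
    simp only [hF, ENNReal.coe_inj]
    exact NNReal.eq h
  have hEn : ∀ (n : ℕ) (x y : ℝ), F (x, y - n) = F (x - c * n, y) := by
    intro n
    induction n with
    | zero => intro x y; simp
    | succ n ih =>
      intro x y
      have h1 := hE (x - c) (y - (n + 1))
      have h2 := ih (x - c) y
      rw [show y - ((n : ℝ) + 1) + 1 = y - n by ring, sub_add_cancel] at h1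
      push_cast
      rw [← h1, h2]
      congr 2; ring
  have hEz : ∀ (n : ℤ) (x y : ℝ), F (x, y - n) = F (x - c * n, y) := by
    intro n x y
    obtain ⟨m, rfl | rfl⟩ := n.eq_nat_or_neg
    · exact_mod_cast hEn m x y
    · have h := hEn m (x + c * m) (y + m)
      push_cast
      rw [add_sub_cancel_right, add_sub_cancel_right] at h
      rw [sub_neg_eq_add, mul_neg, sub_neg_eq_add, h]
  have hg' : ∀ x₁ x₂, g (x₁, x₂) = ∑' j₂ : ℤ, ∑' j₁ : ℤ,
      A (j₁, j₂) * F (x₁ - (j₁ + c * j₂), x₂) := by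
    intro x₁ x₂
    rw [hg, ENNReal.tsum_prod', ENNReal.tsum_comm]
    refine tsum_congr fun j₂ => tsum_congr fun j₁ => ?_
    have := hEz j₂ (x₁ - j₁) x₂
    rw [sub_sub] at this
    rw [← this]
    rfl
  have hsec : ∀ x₂, Measurable fun x₁ => F (x₁, x₂) := fun x₂ =>
    hFm.comp (measurable_id.prodMk measurable_const)
  have hterm : ∀ x₂ (j₂ j₁ : ℤ), Measurable fun x₁ => A (j₁, j₂) * F (x₁ - (j₁ + c * j₂), x₂) :=
    fun x₂ j₂ j₁ => ((hsec x₂).comp (measurable_id.sub_const _)).const_mul _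
  have key : ∀ x₂, eLpNormENN (fun x₁ => g (x₁, x₂)) p₁ volume ≤
      mixedlNorm A r₁ r₂ * eLpNormENN (fun x₁ => F (x₁, x₂)) p₁ volume := by
    intro x₂
    simp only [hg', mixedlNorm]
    refine aux_weighted (fun j₂ x₁ => ∑' j₁ : ℤ, A (j₁, j₂) * F (x₁ - (j₁ + c * j₂), x₂))
      (fun j₂ => Measurable.ennreal_tsum fun j₁ => hterm x₂ j₂ j₁) hr₂
      (hr₂p.trans (min_le_left _ _)) (hr₂p.trans ((min_le_right _ _).trans (min_le_left _ _)))
      _ _ fun j₂ => ?_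
    refine aux_weighted (fun j₁ x₁ => A (j₁, j₂) * F (x₁ - (j₁ + c * j₂), x₂))
      (fun j₁ => hterm x₂ j₂ j₁) hr₁ (hr₁p.trans (min_le_left _ _))
      (hr₁p.trans (min_le_right _ _)) (fun j₁ => A (j₁, j₂)) _ fun j₁ => ?_
    rw [aux_const_mul volume (fun x₁ => F (x₁ - (j₁ + c * j₂), x₂))
      ((hsec x₂).comp (measurable_id.sub_const _)) hp₁]
    gcongr
    exact aux_translate (fun x₁ => F (x₁, x₂)) p₁ _
  unfold mixedLNorm
  rw [← aux_const_mul _ _ (aux_meas F hFm p₁) hp₂]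
  exact aux_mono_s9 _ key p₂
end

section
/- Let d be a positive integer, let S ⊆ {1,…,d}, and for each k ∈ S let v_k ∈ ℝ^d be a vector whose l-th coordinate vanishes unless l < k and l ∉ S. Let f : ℝ^d → ℂ be measurable with |f(x + e_k)| = |f(x + v_k)| for every k ∈ S and every x ∈ ℝ^d, where e_k is the k-th standard basis vector. Let I = { x ∈ ℝ^d : x_k ∈ [0,1] for all k ∈ S }, let p, r ∈ (0,∞] satisfy r ≤ min(1,p), and let a : ℤ^d → ℂ. Define g(x) = Σ_{j∈ℤ^d} |a(j)|·|f(x − j)|. Then ‖g‖_{L^p(I)} ≤ ‖a‖_{ℓ^r(ℤ^d)}·‖f‖_{L^p(I)}. -/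
open MeasureTheory ENNReal

lemma aux_tsum_rpow {ι : Type*} (b : ι → ℝ≥0∞) (R : ℝ) (h0 : 0 < R) (h1 : R ≤ 1) :
    (∑' j, b j) ^ R ≤ ∑' j, b j ^ R := by
  have hfin : ∀ s : Finset ι, (∑ j ∈ s, b j) ^ R ≤ ∑ j ∈ s, b j ^ R := by
    classical
    intro s
    induction s using Finset.induction_on with
    | empty => simp [h0]
    | insert i s hi ih =>
      rw [Finset.sum_insert hi, Finset.sum_insert hi]
      exact (ENNReal.rpow_add_le_add_rpow _ _ h0.le h1).trans (by gcongr)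
  rw [← ENNReal.le_rpow_inv_iff h0, ENNReal.tsum_eq_iSup_sum]
  refine iSup_le fun s => ?_
  rw [ENNReal.le_rpow_inv_iff h0]
  exact (hfin s).trans (ENNReal.sum_le_tsum s)

lemma aux_weight {ι : Type*} (w b : ι → ℝ≥0∞) (q : ℝ) (hq : 1 ≤ q) :
    (∑' j, w j * b j) ^ q ≤ (∑' j, w j) ^ (q - 1) * ∑' j, w j * b j ^ q := by
  have hq0 : 0 < q := by linarith
  rw [← ENNReal.le_rpow_inv_iff hq0, ENNReal.tsum_eq_iSup_sum (f := fun j => w j * b j)]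
  refine iSup_le fun s => ?_
  refine (ENNReal.inner_le_weight_mul_Lp_of_nonneg s hq w b).trans ?_
  rw [ENNReal.mul_rpow_of_nonneg _ _ (by positivity), ← ENNReal.rpow_mul]
  have e : (q - 1) * q⁻¹ = 1 - q⁻¹ := by field_simp
  rw [e]
  have : 0 ≤ 1 - q⁻¹ := by
    have := inv_le_one_of_one_le₀ hq
    linarith
  gcongr <;> exact ENNReal.sum_le_tsum s

lemma aux_shift {d : ℕ} (S : Finset (Fin d)) (v : Fin d → Fin d → ℝ)
    (F : (Fin d → ℝ) → ℝ≥0∞)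
    (h : ∀ k ∈ S, ∀ x : Fin d → ℝ, F (x + Pi.single k (1 : ℝ)) = F (x + v k))
    (j : Fin d → ℤ) (x : Fin d → ℝ) :
    F (x - fun i => (j i : ℝ)) =
      F (x - ((∑ k ∈ S, (j k : ℝ) • v k) + ∑ k ∈ Sᶜ, Pi.single k (j k : ℝ))) := by
  have h1 : ∀ k ∈ S, ∀ (n : ℤ) (x : Fin d → ℝ),
      F (x + (n : ℝ) • (v k - Pi.single k (1 : ℝ))) = F x := by
    intro k hk n
    have hp : ∀ x, F (x + (v k - Pi.single k (1 : ℝ))) = F x := by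
      intro x
      have := h k hk (x - Pi.single k (1 : ℝ))
      rw [sub_add_cancel] at this
      rw [this]; congr 1; abel
    have := (show Function.Periodic F (v k - Pi.single k (1 : ℝ)) from hp).zsmul n
    intro x
    rw [Int.cast_smul_eq_zsmul]
    exact this x
  have h2 : ∀ (T : Finset (Fin d)), T ⊆ S → ∀ x : Fin d → ℝ,
      F (x - ∑ k ∈ T, (j k : ℝ) • (v k - Pi.single k (1 : ℝ))) = F x := by
    classical
    intro T
    induction T using Finset.induction_on with
    | empty => intro _ x; simp
    | insert i s hi ih =>
      intro hs x
      rw [Finset.sum_insert hi]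
      have := h1 i (hs (Finset.mem_insert_self _ _)) (- j i)
        (x - ∑ k ∈ s, (j k : ℝ) • (v k - Pi.single k (1 : ℝ)))
      rw [ih (fun a ha => hs (Finset.mem_insert_of_mem ha))] at this
      rw [← this]; congr 1; push_cast; rw [neg_smul]; abel
  rw [← h2 S subset_rfl (x - fun i => (j i : ℝ))]
  congr 1
  have e : (fun i => (j i : ℝ)) = ∑ k ∈ S, (j k : ℝ) • Pi.single k (1 : ℝ)
      + ∑ k ∈ Sᶜ, Pi.single k (j k : ℝ) := by
    have e1 : ∀ k, (j k : ℝ) • (Pi.single k (1 : ℝ) : Fin d → ℝ) = Pi.single k (j k : ℝ) := by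
      intro k; rw [← Pi.single_smul]; simp
    simp only [e1]
    rw [Finset.sum_add_sum_compl]
    exact (Finset.univ_sum_single (fun i => (j i : ℝ))).symm
  simp only [smul_sub, Finset.sum_sub_distrib]
  rw [e]; abel

theorem stmt_10 (d : ℕ) (hd : 0 < d) (S : Finset (Fin d))
    (v : Fin d → Fin d → ℝ)
    (hv : ∀ k ∈ S, ∀ l : Fin d, ¬(l < k ∧ l ∉ S) → v k l = 0)
    (f : (Fin d → ℝ) → ℂ) (hf : Measurable f)
    (hecho : ∀ k ∈ S, ∀ x : Fin d → ℝ,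
      ‖f (x + Pi.single k (1 : ℝ))‖ = ‖f (x + v k)‖)
    (I : Set (Fin d → ℝ))
    (hI : I = {x : Fin d → ℝ | ∀ k ∈ S, x k ∈ Set.Icc (0 : ℝ) 1})
    (p r : ℝ≥0∞) (hp : 0 < p) (hr : 0 < r) (hrp : r ≤ min 1 p)
    (a : (Fin d → ℤ) → ℂ)
    (g : (Fin d → ℝ) → ℝ≥0∞)
    (hg : ∀ x, g x = ∑' j : Fin d → ℤ,
      (‖a j‖₊ : ℝ≥0∞) * (‖f (x - fun i => (j i : ℝ))‖₊ : ℝ≥0∞)) :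
    eLpNormENN g p (volume.restrict I)
      ≤ eLpNorm a r (Measure.count : Measure (Fin d → ℤ))
          * eLpNorm f p (volume.restrict I) := by
  have hr1 : r ≤ 1 := hrp.trans (min_le_left _ _)
  have hrp' : r ≤ p := hrp.trans (min_le_right _ _)
  have hrt : r ≠ ⊤ := (hr1.trans_lt ENNReal.one_lt_top).ne
  have hR : 0 < r.toReal := ENNReal.toReal_pos hr.ne' hrt
  have hR1 : r.toReal ≤ 1 := by
    simpa using ENNReal.toReal_mono ENNReal.one_ne_top hr1
  set R := r.toReal with hRdef
  set F : (Fin d → ℝ) → ℝ≥0∞ := fun x => ‖f x‖ₑ with hF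
  have hFm : Measurable F := hf.enorm
  have hFe : ∀ k ∈ S, ∀ x : Fin d → ℝ, F (x + Pi.single k (1 : ℝ)) = F (x + v k) := by
    intro k hk x
    simp only [hF]
    rw [← ofReal_norm, ← ofReal_norm, hecho k hk x]
  have hshift := aux_shift S v F hFe
  set w : (Fin d → ℤ) → (Fin d → ℝ) := fun j =>
    ((∑ k ∈ S, (j k : ℝ) • v k) + ∑ k ∈ Sᶜ, Pi.single k (j k : ℝ)) with hw
  have hw0 : ∀ j, ∀ l ∈ S, w j l = 0 := by
    intro j l hl
    simp only [hw, Pi.add_apply, Finset.sum_apply, Pi.smul_apply, smul_eq_mul]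
    rw [Finset.sum_eq_zero, Finset.sum_eq_zero, add_zero]
    · intro k hk
      rw [Pi.single_eq_of_ne]
      rintro rfl
      exact (Finset.mem_compl.mp hk) hl
    · intro k hk
      rw [hv k hk l (fun h => h.2 hl), mul_zero]
  have hIm : MeasurableSet I := by
    have : I = ⋂ k ∈ S, (fun x : Fin d → ℝ => x k) ⁻¹' Set.Icc (0 : ℝ) 1 := by
      rw [hI]; ext x; simp
    rw [this]
    exact Finset.measurableSet_biInter _ fun k _ => measurable_pi_apply k measurableSet_Icc
  have hmp : ∀ j, MeasurePreserving (fun x : Fin d → ℝ => x - w j)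
      (volume.restrict I) (volume.restrict I) := by
    intro j
    have h := (measurePreserving_sub_right (volume : Measure (Fin d → ℝ)) (w j)).restrict_preimage hIm
    have e : (fun x : Fin d → ℝ => x - w j) ⁻¹' I = I := by
      rw [hI]; ext x
      simp only [Set.mem_preimage, Set.mem_setOf_eq, Pi.sub_apply]
      refine forall₂_congr fun k hk => ?_
      rw [hw0 j k hk, sub_zero]
    rwa [e] at h
  have ha : eLpNorm a r (Measure.count : Measure (Fin d → ℤ)) = (∑' j, ‖a j‖ₑ ^ R) ^ (1 / R) := by
    rw [eLpNorm_eq_lintegral_rpow_enorm_toReal hr.ne' hrt, lintegral_count]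
  set A := ∑' j, ‖a j‖ₑ ^ R with hA
  have hgR : ∀ x, g x ^ R ≤ ∑' j, ‖a j‖ₑ ^ R * F (x - w j) ^ R := by
    intro x
    rw [hg x]
    refine (aux_tsum_rpow _ R hR hR1).trans (le_of_eq ?_)
    refine tsum_congr fun j => ?_
    rw [ENNReal.mul_rpow_of_nonneg _ _ hR.le, ← hshift j x]
    rfl
  rw [ha]
  unfold eLpNormENN
  split_ifs with hpt
  · subst hpt
    rw [eLpNorm_exponent_top]
    refine essSup_le_of_ae_le _ ?_
    have h1 : ∀ᵐ x ∂(volume.restrict I), F x ≤ eLpNormEssSup f (volume.restrict I) :=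
      enorm_ae_le_eLpNormEssSup f _
    have h2 : ∀ᵐ x ∂(volume.restrict I), ∀ j,
        F (x - w j) ≤ eLpNormEssSup f (volume.restrict I) :=
      ae_all_iff.mpr fun j => (hmp j).quasiMeasurePreserving.ae h1
    filter_upwards [h2] with x hx
    set M := eLpNormEssSup f (volume.restrict I)
    rw [← ENNReal.rpow_le_rpow_iff hR, ENNReal.mul_rpow_of_nonneg _ _ hR.le, ← ENNReal.rpow_mul,
      one_div, inv_mul_cancel₀ hR.ne', ENNReal.rpow_one, hA, ← ENNReal.tsum_mul_right]
    refine (hgR x).trans (ENNReal.tsum_le_tsum fun j => ?_)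
    gcongr
    exact hx j
  · have hP : 0 < p.toReal := ENNReal.toReal_pos hp.ne' hpt
    have hRP : R ≤ p.toReal := ENNReal.toReal_mono hpt hrp'
    rw [eLpNorm_eq_lintegral_rpow_enorm_toReal hp.ne' hpt]
    set P := p.toReal
    set N := ∫⁻ x, ‖f x‖ₑ ^ P ∂(volume.restrict I) with hN
    set q := P / R with hq
    have hq1 : 1 ≤ q := (one_le_div hR).mpr hRP
    have hRq : R * q = P := by rw [hq]; field_simp
    have hpt : ∀ x, g x ^ P ≤ A ^ (q - 1) * ∑' j, ‖a j‖ₑ ^ R * F (x - w j) ^ P := by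
      intro x
      have h1 := ENNReal.rpow_le_rpow (hgR x) (by linarith : 0 ≤ q)
      rw [← ENNReal.rpow_mul, hRq] at h1
      refine h1.trans ((aux_weight _ _ q hq1).trans (le_of_eq ?_))
      simp only [← ENNReal.rpow_mul, hRq, hA]
    have hm : ∀ j, Measurable fun x => F (x - w j) ^ P := fun j =>
      (hFm.comp (measurable_id.sub_const _)).pow_const _
    have hint : ∫⁻ x, g x ^ P ∂(volume.restrict I) ≤ A ^ q * N := by
      calc ∫⁻ x, g x ^ P ∂(volume.restrict I)
          ≤ ∫⁻ x, A ^ (q - 1) * ∑' j, ‖a j‖ₑ ^ R * F (x - w j) ^ P ∂(volume.restrict I) :=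
            lintegral_mono hpt
        _ = A ^ (q - 1) * ∑' j, ‖a j‖ₑ ^ R * N := by
            rw [lintegral_const_mul _ (Measurable.ennreal_tsum fun j => (hm j).const_mul _),
              lintegral_tsum fun j => ((hm j).const_mul _).aemeasurable]
            congr 1
            refine tsum_congr fun j => ?_
            rw [lintegral_const_mul _ (hm j)]
            congr 1
            exact (hmp j).lintegral_comp (hFm.pow_const P)
        _ = A ^ q * N := by
            rw [ENNReal.tsum_mul_right, ← mul_assoc, ← hA]
            congr 1
            have := ENNReal.rpow_add_of_nonneg (x := A) (q - 1) 1 (by linarith) zero_le_one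
            rw [sub_add_cancel, ENNReal.rpow_one] at this
            exact this.symm
    refine (ENNReal.rpow_le_rpow hint (by positivity)).trans (le_of_eq ?_)
    rw [ENNReal.mul_rpow_of_nonneg _ _ (by positivity), ← ENNReal.rpow_mul]
    congr 2
    rw [hq]; field_simp
end
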